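/- (Large time behavior.) Let (X,d) be a compact geodesic metric space and let H:X×ℝ→ℝ satisfy H(x,p)=H(x,|p|) and (A1)–(A4); set c := max_{x∈X} H(x,0). Let u₀:X→ℝ be Lipschitz continuous and let u be a Lipschitz continuous metric viscosity solution of ∂ₜu + H(x,|Du|) = 0 in (0,∞)×X with u(0,·)=u₀ on [0,∞)×X. Then there exists a function v:X→ℝ such that u(t,x) + ct converges to v(x) uniformly on X as t → ∞, and v is a metric viscosity solution of the stationary equation H(x,|Dv|) = c in X. -/

import Mathlib

open Filter Metric Set Topology

noncomputable section

/-- A geodesic metric space: any two points are joined by a constant-speed geodesic. -/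
def IsGeodesicSpace (X : Type*) [MetricSpace X] : Prop :=
  ∀ x y : X, ∃ f : ℝ → X, f 0 = x ∧ f 1 = y ∧
    ∀ s ∈ Set.Icc (0:ℝ) 1, ∀ t ∈ Set.Icc (0:ℝ) 1,
      dist (f s) (f t) = |s - t| * dist x y

variable {X : Type*} [MetricSpace X]

/-- Upper local mslope |∇⁺v|(x) = limsup_{y→x} [v(y)-v(x)]₊ / d(y,x). -/
def mslopeUp (v : X → ℝ) (x : X) : ℝ :=
  Filter.limsup (fun y => max (v y - v x) 0 / dist y x) (𝓝[≠] x)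

/-- Lower local mslope |∇⁻v|(x) = limsup_{y→x} [v(y)-v(x)]₋ / d(y,x). -/
def mslopeDown (v : X → ℝ) (x : X) : ℝ :=
  Filter.limsup (fun y => max (v x - v y) 0 / dist y x) (𝓝[≠] x)

/-- Local mslope |∇v|(x) = limsup_{y→x} |v(y)-v(x)| / d(y,x). -/
def mslope (v : X → ℝ) (x : X) : ℝ :=
  Filter.limsup (fun y => |v y - v x| / dist y x) (𝓝[≠] x)

/-- Spatial upper local mslope of a function of time and space. -/
def slopeUpT (u : ℝ × X → ℝ) (z : ℝ × X) : ℝ := mslopeUp (fun y => u (z.1, y)) z.2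

/-- Spatial lower local mslope of a function of time and space. -/
def slopeDownT (u : ℝ × X → ℝ) (z : ℝ × X) : ℝ := mslopeDown (fun y => u (z.1, y)) z.2

/-- Spatial local mslope of a function of time and space. -/
def slopeT (u : ℝ × X → ℝ) (z : ℝ × X) : ℝ := mslope (fun y => u (z.1, y)) z.2

/-- Time derivative ∂ₜu. -/
def timeDeriv (u : ℝ × X → ℝ) (z : ℝ × X) : ℝ := deriv (fun s => u (s, z.2)) z.1

/-- Locally Lipschitz on a set. -/
def LocLipOn {α : Type*} [PseudoMetricSpace α] (s : Set α) (f : α → ℝ) : Prop :=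
  ∀ z ∈ s, ∃ K : NNReal, ∃ t ∈ 𝓝[s] z, LipschitzOnWith K f t

/-- The class 𝒞(Q): locally Lipschitz with (existing) continuous time derivative. -/
def IsCQ (Q : Set (ℝ × X)) (u : ℝ × X → ℝ) : Prop :=
  LocLipOn Q u ∧
  (∀ z ∈ Q, DifferentiableAt ℝ (fun s : ℝ => u (s, z.2)) z.1) ∧
  ContinuousOn (timeDeriv u) Q

/-- The class C̲¹(Q). -/
def IsC1UnderQ (Q : Set (ℝ × X)) (u : ℝ × X → ℝ) : Prop :=
  IsCQ Q u ∧ Set.EqOn (slopeDownT u) (slopeT u) Q ∧ ContinuousOn (slopeT u) Q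

/-- The class C̄¹(Q). -/
def IsC1UpperQ (Q : Set (ℝ × X)) (u : ℝ × X → ℝ) : Prop :=
  IsCQ Q u ∧ Set.EqOn (slopeUpT u) (slopeT u) Q ∧ ContinuousOn (slopeT u) Q

/-- The class 𝒞(U) for stationary problems: locally Lipschitz functions. -/
def IsCU (U : Set X) (v : X → ℝ) : Prop := LocLipOn U v

/-- The class C̲¹(U). -/
def IsC1UnderU (U : Set X) (v : X → ℝ) : Prop :=
  IsCU U v ∧ Set.EqOn (mslopeDown v) (mslope v) U ∧ ContinuousOn (mslope v) U

/-- The class C̄¹(U). -/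
def IsC1UpperU (U : Set X) (v : X → ℝ) : Prop :=
  IsCU U v ∧ Set.EqOn (mslopeUp v) (mslope v) U ∧ ContinuousOn (mslope v) U

/-- F_r(z,p,q) = sup_{p'∈[-1,1]} F(z,p+rp',q) if r ≥ 0, inf if r ≤ 0. -/
def Fr (F : (ℝ × X) → ℝ → ℝ → ℝ) (r : ℝ) (z : ℝ × X) (p q : ℝ) : ℝ :=
  if 0 ≤ r then sSup ((fun p' => F z (p + r * p') q) '' Set.Icc (-1:ℝ) 1)
  else sInf ((fun p' => F z (p + r * p') q) '' Set.Icc (-1:ℝ) 1)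

/-- H_r(x,p) = sup_{p'∈[-1,1]} H(x,p+rp') if r ≥ 0, inf if r ≤ 0. -/
def Hr (H : X → ℝ → ℝ) (r : ℝ) (x : X) (p : ℝ) : ℝ :=
  if 0 ≤ r then sSup ((fun p' => H x (p + r * p')) '' Set.Icc (-1:ℝ) 1)
  else sInf ((fun p' => H x (p + r * p')) '' Set.Icc (-1:ℝ) 1)

/-- Upper semicontinuous envelope (relative to a set) of an extended-real function. -/
def uscEnv {α : Type*} [TopologicalSpace α] (s : Set α) (u : α → EReal) (z : α) : EReal :=
  Filter.limsup u (𝓝[s] z)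

/-- Lower semicontinuous envelope (relative to a set) of an extended-real function. -/
def lscEnv {α : Type*} [TopologicalSpace α] (s : Set α) (u : α → EReal) (z : α) : EReal :=
  Filter.liminf u (𝓝[s] z)

/-- Upper semicontinuous envelope (relative to a set) of a real function. -/
def uscEnvR {α : Type*} [TopologicalSpace α] (s : Set α) (f : α → ℝ) (z : α) : ℝ :=
  Filter.limsup f (𝓝[s] z)

/-- Metric viscosity subsolution of F(z,|Du|,∂ₜu)=0 in Q (Gangbo–Święch). -/
def IsSubsol (Q : Set (ℝ × X)) (F : (ℝ × X) → ℝ → ℝ → ℝ) (u : ℝ × X → EReal) : Prop :=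
  ∀ ψ₁ ψ₂ : ℝ × X → ℝ, IsC1UnderQ Q ψ₁ → IsCQ Q ψ₂ → ∀ z ∈ Q,
    (∃ R > 0, uscEnv Q u z = ((ψ₁ z + ψ₂ z : ℝ) : EReal) ∧
      ∀ w ∈ Metric.ball z R ∩ Q, uscEnv Q u w ≤ ((ψ₁ w + ψ₂ w : ℝ) : EReal)) →
    Fr F (-(uscEnvR Q (slopeT ψ₂) z)) z (slopeT ψ₁ z)
      (timeDeriv (fun w => ψ₁ w + ψ₂ w) z) ≤ 0

/-- Metric viscosity supersolution of F(z,|Du|,∂ₜu)=0 in Q (Gangbo–Święch). -/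
def IsSupersol (Q : Set (ℝ × X)) (F : (ℝ × X) → ℝ → ℝ → ℝ) (u : ℝ × X → EReal) : Prop :=
  ∀ ψ₁ ψ₂ : ℝ × X → ℝ, IsC1UpperQ Q ψ₁ → IsCQ Q ψ₂ → ∀ z ∈ Q,
    (∃ R > 0, lscEnv Q u z = ((ψ₁ z + ψ₂ z : ℝ) : EReal) ∧
      ∀ w ∈ Metric.ball z R ∩ Q, ((ψ₁ w + ψ₂ w : ℝ) : EReal) ≤ lscEnv Q u w) →
    0 ≤ Fr F (uscEnvR Q (slopeT ψ₂) z) z (slopeT ψ₁ z)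
      (timeDeriv (fun w => ψ₁ w + ψ₂ w) z)

/-- Metric viscosity solution. -/
def IsSol (Q : Set (ℝ × X)) (F : (ℝ × X) → ℝ → ℝ → ℝ) (u : ℝ × X → EReal) : Prop :=
  IsSubsol Q F u ∧ IsSupersol Q F u

/-- Metric viscosity subsolution of the stationary equation H(x,|Dv|)=0 in U. -/
def IsSubsolS (U : Set X) (H : X → ℝ → ℝ) (v : X → EReal) : Prop :=
  ∀ ψ₁ ψ₂ : X → ℝ, IsC1UnderU U ψ₁ → IsCU U ψ₂ → ∀ x ∈ U,
    (∃ R > 0, uscEnv U v x = ((ψ₁ x + ψ₂ x : ℝ) : EReal) ∧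
      ∀ w ∈ Metric.ball x R ∩ U, uscEnv U v w ≤ ((ψ₁ w + ψ₂ w : ℝ) : EReal)) →
    Hr H (-(uscEnvR U (mslope ψ₂) x)) x (mslope ψ₁ x) ≤ 0

/-- Metric viscosity supersolution of the stationary equation H(x,|Dv|)=0 in U. -/
def IsSupersolS (U : Set X) (H : X → ℝ → ℝ) (v : X → EReal) : Prop :=
  ∀ ψ₁ ψ₂ : X → ℝ, IsC1UpperU U ψ₁ → IsCU U ψ₂ → ∀ x ∈ U,
    (∃ R > 0, lscEnv U v x = ((ψ₁ x + ψ₂ x : ℝ) : EReal) ∧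
      ∀ w ∈ Metric.ball x R ∩ U, ((ψ₁ w + ψ₂ w : ℝ) : EReal) ≤ lscEnv U v w) →
    0 ≤ Hr H (uscEnvR U (mslope ψ₂) x) x (mslope ψ₁ x)

/-- Metric viscosity solution of the stationary equation. -/
def IsSolS (U : Set X) (H : X → ℝ → ℝ) (v : X → EReal) : Prop :=
  IsSubsolS U H v ∧ IsSupersolS U H v

/-! ### Locally Lipschitz functions and local slopes -/

theorem locLipOn_univ_iff {α : Type*} [PseudoMetricSpace α] {f : α → ℝ} :
    LocLipOn univ f ↔ LocallyLipschitz f := by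
  simp [LocLipOn, LocallyLipschitz]

theorem LocallyLipschitz.locLipOn {α : Type*} [PseudoMetricSpace α] {f : α → ℝ}
    (hf : LocallyLipschitz f) (s : Set α) : LocLipOn s f := fun z _ => by
  obtain ⟨K, t, ht, hK⟩ := hf z
  exact ⟨K, t, mem_nhdsWithin_of_mem_nhds ht, hK⟩

theorem LocallyLipschitz.eventually_abs_sub_le {v : X → ℝ} (hv : LocallyLipschitz v) (x : X) :
    ∃ K : ℝ, 0 ≤ K ∧ ∀ᶠ y in 𝓝 x, ∀ᶠ z in 𝓝 y, |v z - v y| ≤ K * dist z y := by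
  obtain ⟨K, t, ht, hK⟩ := hv x
  refine ⟨K, K.2, ?_⟩
  filter_upwards [eventually_mem_nhds_iff.2 ht] with y hy
  filter_upwards [hy] with z hz
  simpa [Real.dist_eq] using hK.dist_le_mul z hz y (mem_of_mem_nhds hy)

theorem mslope_le {v : X → ℝ} {x : X} {s : ℝ} (hs : 0 ≤ s)
    (h : ∀ᶠ y in 𝓝 x, |v y - v x| ≤ s * dist y x) : mslope v x ≤ s := by
  unfold mslope
  rcases (𝓝[≠] x).eq_or_neBot with hb | hb
  · simpa [hb, limsup_eq] using hs
  · refine limsup_le_of_le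
      (isCoboundedUnder_le_of_eventually_le _ (x := 0) (.of_forall fun y => by positivity)) ?_
    filter_upwards [eventually_nhdsWithin_of_eventually_nhds h] with y hy
    exact div_le_of_le_mul₀ dist_nonneg hs hy

theorem LocallyLipschitz.isBoundedUnder_slope {v : X → ℝ} (hv : LocallyLipschitz v) (x : X) :
    IsBoundedUnder (· ≤ ·) (𝓝[≠] x) fun y => |v y - v x| / dist y x := by
  obtain ⟨K, hK, h⟩ := hv.eventually_abs_sub_le x
  refine isBoundedUnder_of_eventually_le (a := K) ?_
  filter_upwards [eventually_nhdsWithin_of_eventually_nhds h.self_of_nhds] with y hy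
  exact div_le_of_le_mul₀ dist_nonneg hK hy

theorem mslope_nonneg {v : X → ℝ} (hv : LocallyLipschitz v) (x : X) : 0 ≤ mslope v x := by
  unfold mslope
  rcases (𝓝[≠] x).eq_or_neBot with hb | hb
  · simp [hb, limsup_eq]
  · exact le_limsup_of_frequently_le (Frequently.of_forall fun y => by positivity)
      (hv.isBoundedUnder_slope x)

theorem eventually_abs_sub_le_of_mslope_lt {v : X → ℝ} (hv : LocallyLipschitz v) {x : X} {s : ℝ}
    (h : mslope v x < s) : ∀ᶠ y in 𝓝 x, |v y - v x| ≤ s * dist y x := by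
  have := eventually_lt_of_limsup_lt h (hv.isBoundedUnder_slope x)
  filter_upwards [eventually_nhdsWithin_iff.1 this] with y hy
  rcases eq_or_ne y x with rfl | hne
  · simp
  · exact (div_le_iff₀ (dist_pos.2 hne)).1 (hy hne).le

theorem mslope_add_le {v w : X → ℝ} (hv : LocallyLipschitz v) {x : X} {s : ℝ} (hs : 0 ≤ s)
    (h : ∀ᶠ y in 𝓝 x, |w y - w x| ≤ s * dist y x) :
    mslope (fun y => v y + w y) x ≤ mslope v x + s := by
  refine le_of_forall_pos_le_add fun ε hε => ?_
  have h0 := mslope_nonneg hv x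
  refine mslope_le (by positivity) ?_
  filter_upwards [h, eventually_abs_sub_le_of_mslope_lt hv (lt_add_of_pos_right _ hε)]
    with y h1 h2
  have : v y + w y - (v x + w x) = (v y - v x) + (w y - w x) := by ring
  rw [this]
  linarith [abs_add_le (v y - v x) (w y - w x)]

theorem LocallyLipschitz.isBoundedUnder_mslope {v : X → ℝ} (hv : LocallyLipschitz v) (x : X) :
    IsBoundedUnder (· ≤ ·) (𝓝[univ] x) (mslope v) := by
  obtain ⟨K, hK, h⟩ := hv.eventually_abs_sub_le x
  rw [nhdsWithin_univ]
  exact isBoundedUnder_of_eventually_le (a := K) (h.mono fun y hy => mslope_le hK hy)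

theorem uscEnvR_mslope_nonneg {v : X → ℝ} (hv : LocallyLipschitz v) (x : X) :
    0 ≤ uscEnvR univ (mslope v) x := by
  have : (𝓝[univ] x).NeBot := by rw [nhdsWithin_univ]; infer_instance
  exact le_limsup_of_frequently_le (Frequently.of_forall fun y => mslope_nonneg hv y)
    (hv.isBoundedUnder_mslope x)

theorem uscEnvR_mslope_le {v : X → ℝ} (hv : LocallyLipschitz v) {x : X} {s : ℝ}
    (h : ∀ᶠ y in 𝓝 x, mslope v y ≤ s) : uscEnvR univ (mslope v) x ≤ s := by
  have : (𝓝[univ] x).NeBot := by rw [nhdsWithin_univ]; infer_instance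
  refine limsup_le_of_le
    (isCoboundedUnder_le_of_eventually_le _ (x := 0) (.of_forall fun y => mslope_nonneg hv y)) ?_
  rwa [nhdsWithin_univ]

theorem eventually_mslope_lt {v : X → ℝ} (hv : LocallyLipschitz v) {x : X} {s : ℝ}
    (h : uscEnvR univ (mslope v) x < s) : ∀ᶠ y in 𝓝 x, mslope v y < s := by
  have := eventually_lt_of_limsup_lt h (hv.isBoundedUnder_mslope x)
  rwa [nhdsWithin_univ] at this

theorem mslope_neg (v : X → ℝ) : mslope (fun y => -v y) = mslope v := by
  ext x
  unfold mslope
  congr! 3 with y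
  rw [← abs_neg]
  ring_nf

theorem mslopeUp_neg (v : X → ℝ) : mslopeUp (fun y => -v y) = mslopeDown v := by
  ext x
  unfold mslopeUp mslopeDown
  congr! 4 with y
  ring

theorem mslope_add_const (v : X → ℝ) (k : ℝ) : mslope (fun y => v y + k) = mslope v := by
  ext x
  simp [mslope]

theorem IsC1UnderU.neg {v : X → ℝ} (h : IsC1UnderU univ v) : IsC1UpperU univ fun y => -v y := by
  obtain ⟨h1, h2, h3⟩ := h
  refine ⟨locLipOn_univ_iff.2 (locLipOn_univ_iff.1 h1).neg, ?_, ?_⟩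
  · rwa [mslope_neg, mslopeUp_neg]
  · rwa [mslope_neg]

theorem IsC1UpperU.neg {v : X → ℝ} (h : IsC1UpperU univ v) : IsC1UnderU univ fun y => -v y := by
  obtain ⟨h1, h2, h3⟩ := h
  refine ⟨locLipOn_univ_iff.2 (locLipOn_univ_iff.1 h1).neg, ?_, ?_⟩
  · rw [mslope_neg, ← mslopeUp_neg]
    simpa using h2
  · rwa [mslope_neg]

theorem isC1UnderU_zero : IsC1UnderU (univ : Set X) fun _ => 0 := by
  have h : mslope (fun _ : X => (0 : ℝ)) = fun _ => 0 := by
    ext x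
    exact le_antisymm (mslope_le le_rfl (by simp)) (mslope_nonneg (LocallyLipschitz.const 0) x)
  refine ⟨locLipOn_univ_iff.2 (LocallyLipschitz.const 0), fun x _ => ?_, ?_⟩
  · simp [mslope, mslopeDown]
  · rw [h]; exact continuousOn_const

/-! ### The squared distance function -/

theorem abs_dist_sq_sub_le (x y z : X) :
    |dist z y ^ 2 - dist x y ^ 2| ≤ (dist z y + dist x y) * dist z x := by
  have h : dist z y ^ 2 - dist x y ^ 2 = (dist z y + dist x y) * (dist z y - dist x y) := by ring
  rw [h, abs_mul, abs_of_nonneg (by positivity)]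
  gcongr
  exact abs_dist_sub_le z x y

theorem locallyLipschitz_dist_sq (k : ℝ) (y : X) :
    LocallyLipschitz fun x => k * dist x y ^ 2 := by
  have h : LocallyLipschitz fun r : ℝ => k * r ^ 2 :=
    ContDiff.locallyLipschitz (𝕂 := ℝ) (by fun_prop)
  exact h.comp (LipschitzWith.dist_left y).locallyLipschitz

theorem mslopeDown_le_mslope {v : X → ℝ} (hv : LocallyLipschitz v) (x : X) :
    mslopeDown v x ≤ mslope v x := by
  unfold mslopeDown mslope
  rcases (𝓝[≠] x).eq_or_neBot with hb | hb
  · simp [hb, limsup_eq]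
  · refine limsup_le_limsup (.of_forall fun y => ?_)
      (isCoboundedUnder_le_of_eventually_le _ (x := 0) (.of_forall fun y => by positivity))
      (hv.isBoundedUnder_slope x)
    dsimp only
    gcongr
    rw [abs_sub_comm]
    exact max_le (le_abs_self _) (abs_nonneg _)

theorem mslope_dist_sq_le {k : ℝ} (hk : 0 ≤ k) (x y : X) :
    mslope (fun z => k * dist z y ^ 2) x ≤ k * (2 * dist x y) := by
  refine le_of_forall_pos_le_add fun ε hε => ?_
  refine mslope_le (by positivity) ?_
  have hc : Tendsto (fun z => k * (dist z y + dist x y)) (𝓝 x) (𝓝 (k * (dist x y + dist x y))) :=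
    Continuous.tendsto (by fun_prop) x
  filter_upwards [hc.eventually_le_const (u := k * (2 * dist x y) + ε) (by linarith)] with z hz
  rw [← mul_sub, abs_mul, abs_of_nonneg hk]
  calc k * |dist z y ^ 2 - dist x y ^ 2| ≤ k * ((dist z y + dist x y) * dist z x) := by
        gcongr; exact abs_dist_sq_sub_le x y z
    _ = k * (dist z y + dist x y) * dist z x := by ring
    _ ≤ _ := by gcongr

theorem le_mslopeDown_dist_sq (hgeo : IsGeodesicSpace X) (k : ℝ) (x y : X) :
    k * (2 * dist x y) ≤ mslopeDown (fun z => k * dist z y ^ 2) x := by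
  have hlip := locallyLipschitz_dist_sq k y
  have hbdd : IsBoundedUnder (· ≤ ·) (𝓝[≠] x)
      fun z => max (k * dist x y ^ 2 - k * dist z y ^ 2) 0 / dist z x := by
    refine (hlip.isBoundedUnder_slope x).mono_le (.of_forall fun z => ?_)
    dsimp only
    gcongr
    rw [abs_sub_comm]
    exact max_le (le_abs_self _) (abs_nonneg _)
  unfold mslopeDown
  rcases eq_or_ne x y with rfl | hne
  · rcases (𝓝[≠] x).eq_or_neBot with hb | hb
    · simp [hb, limsup_eq]
    · simpa using le_limsup_of_frequently_le
        (Frequently.of_forall (f := 𝓝[≠] x) fun z => by positivity) hbdd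
  have hD : 0 < dist x y := dist_pos.2 hne
  obtain ⟨f, hf0, hf1, hf⟩ := hgeo x y
  have hd : ∀ s ∈ Icc (0 : ℝ) 1, dist (f s) x = s * dist x y := fun s hs => by
    have := hf s hs 0 (by simp)
    rwa [hf0, sub_zero, abs_of_nonneg hs.1] at this
  have hd' : ∀ s ∈ Icc (0 : ℝ) 1, dist (f s) y = (1 - s) * dist x y := fun s hs => by
    have := hf s hs 1 (by simp)
    rwa [hf1, abs_sub_comm, abs_of_nonneg (by linarith [hs.2])] at this
  have hI : ∀ᶠ s : ℝ in 𝓝[>] 0, s ∈ Ioc (0 : ℝ) 1 := Ioc_mem_nhdsGT one_pos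
  have hft : Tendsto f (𝓝[>] 0) (𝓝[≠] x) := by
    refine tendsto_nhdsWithin_iff.2 ⟨tendsto_iff_dist_tendsto_zero.2 ?_, ?_⟩
    · have h0 : Tendsto (fun s : ℝ => s * dist x y) (𝓝[>] 0) (𝓝 0) := by
        have : Tendsto (fun s : ℝ => s * dist x y) (𝓝 0) (𝓝 (0 * dist x y)) :=
          Continuous.tendsto (by fun_prop) 0
        rw [zero_mul] at this
        exact this.mono_left nhdsWithin_le_nhds
      refine h0.congr' ?_
      filter_upwards [hI] with s hs using (hd s ⟨hs.1.le, hs.2⟩).symm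
    · filter_upwards [hI] with s hs
      refine dist_pos.1 ?_
      rw [hd s ⟨hs.1.le, hs.2⟩]
      exact mul_pos hs.1 hD
  refine le_of_forall_pos_le_add fun ε hε => ?_
  rw [← sub_le_iff_le_add]
  refine le_limsup_of_frequently_le ?_ hbdd
  refine hft.frequently (Eventually.frequently ?_)
  have hs0 : Tendsto (fun s : ℝ => k * (dist x y * (2 - s))) (𝓝[>] 0)
      (𝓝 (k * (dist x y * (2 - 0)))) :=
    (Continuous.tendsto (by fun_prop) 0).mono_left nhdsWithin_le_nhds
  filter_upwards [hI, hs0.eventually_const_le (u := k * (2 * dist x y) - ε) (by linarith)]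
    with s hs hs'
  refine hs'.trans ?_
  rw [hd s ⟨hs.1.le, hs.2⟩, hd' s ⟨hs.1.le, hs.2⟩, le_div_iff₀ (mul_pos hs.1 hD)]
  refine le_trans (le_of_eq ?_) (le_max_left _ _)
  ring

theorem mslope_dist_sq (hgeo : IsGeodesicSpace X) {k : ℝ} (hk : 0 ≤ k) (x y : X) :
    mslope (fun z => k * dist z y ^ 2) x = k * (2 * dist x y) :=
  le_antisymm (mslope_dist_sq_le hk x y) ((le_mslopeDown_dist_sq hgeo k x y).trans
    (mslopeDown_le_mslope (locallyLipschitz_dist_sq k y) x))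

theorem isC1UnderU_dist_sq (hgeo : IsGeodesicSpace X) {k : ℝ} (hk : 0 ≤ k) (y : X) :
    IsC1UnderU univ fun z => k * dist z y ^ 2 := by
  refine ⟨locLipOn_univ_iff.2 (locallyLipschitz_dist_sq k y), fun x _ => ?_, ?_⟩
  · refine le_antisymm (mslopeDown_le_mslope (locallyLipschitz_dist_sq k y) x) ?_
    rw [mslope_dist_sq hgeo hk]
    exact le_mslopeDown_dist_sq hgeo k x y
  · rw [funext fun x => mslope_dist_sq hgeo hk x y]
    fun_prop

/-! ### Reformulations of the viscosity inequalities -/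

theorem Hr_neg_le_zero_iff {Y : Type*} [MetricSpace Y] {G : Y → ℝ → ℝ} {z : Y}
    (hG : Continuous (G z)) {r : ℝ} (hr : 0 ≤ r) (p : ℝ) :
    Hr G (-r) z p ≤ 0 ↔ ∃ q, |q - p| ≤ r ∧ G z q ≤ 0 := by
  rcases hr.eq_or_lt with rfl | hr
  · have h : ((fun p' : ℝ => G z (p + 0 * p')) '' Icc (-1) 1) = {G z p} := by
      simp [Set.Nonempty.image_const]
    simp only [Hr, neg_zero, le_refl, if_true, h, csSup_singleton]
    refine ⟨fun h => ⟨p, by simp, h⟩, fun ⟨q, hq, h⟩ => ?_⟩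
    rwa [sub_eq_zero.1 (abs_nonpos_iff.1 hq)] at h
  rw [Hr, if_neg (by linarith)]
  have hcomp : IsCompact ((fun p' : ℝ => G z (p + -r * p')) '' Icc (-1) 1) :=
    isCompact_Icc.image (hG.comp (by fun_prop))
  constructor
  · intro h
    obtain ⟨s, hs, hs'⟩ := hcomp.sInf_mem ((nonempty_Icc.2 (by norm_num)).image _)
    refine ⟨p + -r * s, ?_, hs'.trans_le h⟩
    rw [add_sub_cancel_left, abs_mul, abs_neg, abs_of_pos hr]
    exact mul_le_of_le_one_right hr.le (abs_le.2 hs)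
  · rintro ⟨q, hq, h⟩
    refine (csInf_le hcomp.bddBelow ⟨(p - q) / r, ?_, rfl⟩).trans ?_
    · rw [mem_Icc, ← abs_le, abs_div, abs_of_pos hr, abs_sub_comm]
      exact div_le_one_of_le₀ hq hr.le
    · have : p + -r * ((p - q) / r) = q := by field_simp; ring
      simpa only [this] using h

theorem zero_le_Hr_iff {Y : Type*} [MetricSpace Y] {G : Y → ℝ → ℝ} {z : Y}
    (hG : Continuous (G z)) {r : ℝ} (hr : 0 ≤ r) (p : ℝ) :
    0 ≤ Hr G r z p ↔ ∃ q, |q - p| ≤ r ∧ 0 ≤ G z q := by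
  rw [Hr, if_pos hr]
  have hcomp : IsCompact ((fun p' : ℝ => G z (p + r * p')) '' Icc (-1) 1) :=
    isCompact_Icc.image (hG.comp (by fun_prop))
  constructor
  · intro h
    obtain ⟨s, hs, hs'⟩ := hcomp.sSup_mem ((nonempty_Icc.2 (by norm_num)).image _)
    refine ⟨p + r * s, ?_, h.trans_eq hs'.symm⟩
    rw [add_sub_cancel_left, abs_mul, abs_of_nonneg hr]
    exact mul_le_of_le_one_right hr (abs_le.2 hs)
  · rintro ⟨q, hq, h⟩
    refine le_trans ?_ (le_csSup hcomp.bddAbove ⟨(q - p) / r, ?_, rfl⟩)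
    · rcases hr.eq_or_lt with rfl | hr
      · rw [sub_eq_zero.1 (abs_nonpos_iff.1 hq)] at h
        simpa using h
      · have : p + r * ((q - p) / r) = q := by field_simp; ring
        simpa only [this] using h
    · rw [mem_Icc, ← abs_le, abs_div, abs_of_nonneg hr]
      exact div_le_one_of_le₀ hq hr

theorem uscEnv_coe {α : Type*} [TopologicalSpace α] {s : Set α} {f : α → ℝ}
    (hf : ContinuousOn f s) {z : α} (hz : z ∈ s) : uscEnv s (fun w => (f w : EReal)) z = f z := by
  have := mem_closure_iff_nhdsWithin_neBot.1 (subset_closure hz)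
  exact ((continuous_coe_real_ereal.tendsto _).comp (hf z hz)).limsup_eq

theorem lscEnv_coe {α : Type*} [TopologicalSpace α] {s : Set α} {f : α → ℝ}
    (hf : ContinuousOn f s) {z : α} (hz : z ∈ s) : lscEnv s (fun w => (f w : EReal)) z = f z := by
  have := mem_closure_iff_nhdsWithin_neBot.1 (subset_closure hz)
  exact ((continuous_coe_real_ereal.tendsto _).comp (hf z hz)).liminf_eq

/-- Subsolutions of `∂ₜu + H(x,|Du|) = 0` for positive times, tested only with functions
`ψ₁(x) + ψ₂(x) + h(t)`. Supersolutions correspond to `EvolutionSubsol (-H) (-u)`. -/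
def EvolutionSubsol (H : X → ℝ → ℝ) (u : ℝ × X → ℝ) : Prop :=
  ∀ (ψ₁ ψ₂ : X → ℝ) (h h' : ℝ → ℝ), IsC1UnderU univ ψ₁ → LocallyLipschitz ψ₂ →
    (∀ t, HasDerivAt h (h' t) t) → Continuous h' → ∀ t > 0, ∀ x,
    (∀ᶠ w in 𝓝 (t, x),
      u w - (ψ₁ w.2 + ψ₂ w.2 + h w.1) ≤ u (t, x) - (ψ₁ x + ψ₂ x + h t)) →
    ∃ q, |q - mslope ψ₁ x| ≤ uscEnvR univ (mslope ψ₂) x ∧ h' t + H x q ≤ 0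

/-- Subsolutions of `G(x,|Dv|) = 0`, with the viscosity inequality written out.
Supersolutions correspond to `StationarySubsol (-G) (-v)`. -/
def StationarySubsol (G : X → ℝ → ℝ) (v : X → ℝ) : Prop :=
  ∀ ψ₁ ψ₂ : X → ℝ, IsC1UnderU univ ψ₁ → LocallyLipschitz ψ₂ → ∀ x,
    (∀ᶠ y in 𝓝 x, v y - (ψ₁ y + ψ₂ y) ≤ v x - (ψ₁ x + ψ₂ x)) →
    ∃ q, |q - mslope ψ₁ x| ≤ uscEnvR univ (mslope ψ₂) x ∧ G x q ≤ 0

theorem StationarySubsol.isSubsolS {G : X → ℝ → ℝ} (hG : ∀ x, Continuous (G x)) {v : X → ℝ}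
    (hv : Continuous v) (h : StationarySubsol G v) :
    IsSubsolS univ G fun x => (v x : EReal) := by
  rintro ψ₁ ψ₂ h₁ h₂ x hx ⟨R, hR, hzero, hle⟩
  have h₂' := locLipOn_univ_iff.1 h₂
  rw [Hr_neg_le_zero_iff (hG x) (uscEnvR_mslope_nonneg h₂' x)]
  refine h ψ₁ ψ₂ h₁ h₂' x ?_
  rw [uscEnv_coe hv.continuousOn hx, EReal.coe_eq_coe_iff] at hzero
  filter_upwards [ball_mem_nhds x hR] with y hy
  have := hle y ⟨hy, mem_univ y⟩
  rw [uscEnv_coe hv.continuousOn (mem_univ y), EReal.coe_le_coe_iff] at this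
  linarith

theorem StationarySubsol.isSupersolS {G : X → ℝ → ℝ} (hG : ∀ x, Continuous (G x)) {v : X → ℝ}
    (hv : Continuous v) (h : StationarySubsol (fun x p => -G x p) fun x => -v x) :
    IsSupersolS univ G fun x => (v x : EReal) := by
  rintro ψ₁ ψ₂ h₁ h₂ x hx ⟨R, hR, hzero, hle⟩
  have h₂' := locLipOn_univ_iff.1 h₂
  rw [zero_le_Hr_iff (hG x) (uscEnvR_mslope_nonneg h₂' x)]
  rw [lscEnv_coe hv.continuousOn hx, EReal.coe_eq_coe_iff] at hzero
  obtain ⟨q, hq, hq'⟩ := h (fun y => -ψ₁ y) (fun y => -ψ₂ y) h₁.neg h₂'.neg x (by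
    filter_upwards [ball_mem_nhds x hR] with y hy
    have := hle y ⟨hy, mem_univ y⟩
    rw [lscEnv_coe hv.continuousOn (mem_univ y), EReal.coe_le_coe_iff] at this
    linarith)
  rw [mslope_neg, mslope_neg] at hq
  exact ⟨q, hq, by linarith⟩

theorem isOpen_Ioi_prod_univ : IsOpen (Ioi (0 : ℝ) ×ˢ (univ : Set X)) :=
  isOpen_Ioi.prod isOpen_univ

theorem uscEnvR_comp_snd (f : X → ℝ) {z : ℝ × X} (hz : z ∈ Ioi (0 : ℝ) ×ˢ (univ : Set X)) :
    uscEnvR (Ioi (0 : ℝ) ×ˢ (univ : Set X)) (fun w => f w.2) z = uscEnvR univ f z.2 := by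
  rw [uscEnvR, isOpen_Ioi_prod_univ.nhdsWithin_eq hz, uscEnvR, nhdsWithin_univ, ← map_snd_nhds]
  rfl

theorem isCQ_of_space_add_time {Q : Set (ℝ × X)} {f : X → ℝ} {h h' : ℝ → ℝ}
    (hf : LocallyLipschitz f) (hh : ∀ t, HasDerivAt h (h' t) t) (hh' : Continuous h') :
    IsCQ Q fun w => f w.2 + h w.1 := by
  have hd : timeDeriv (fun w : ℝ × X => f w.2 + h w.1) = fun w => h' w.1 := by
    ext z
    exact ((hh z.1).const_add (f z.2)).deriv
  refine ⟨LocallyLipschitz.locLipOn ?_ Q, 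
    fun z _ => ((hh z.1).const_add (f z.2)).differentiableAt, ?_⟩
  · have hc : ContDiff ℝ 1 h := contDiff_one_iff_deriv.2
      ⟨fun t => (hh t).differentiableAt, by rwa [funext fun t => (hh t).deriv]⟩
    exact (hf.comp LipschitzWith.prod_snd.locallyLipschitz).add
      (hc.locallyLipschitz.comp LipschitzWith.prod_fst.locallyLipschitz)
  · rw [hd]
    fun_prop

theorem isCQ_of_space {Q : Set (ℝ × X)} {f : X → ℝ} (hf : LocallyLipschitz f) :
    IsCQ Q fun w => f w.2 := by
  simpa using isCQ_of_space_add_time (Q := Q) (h := fun _ => 0) hf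
    (fun t => hasDerivAt_const t 0) continuous_const

theorem IsC1UnderU.isC1UnderQ {Q : Set (ℝ × X)} {ψ : X → ℝ} (h : IsC1UnderU univ ψ) :
    IsC1UnderQ Q fun w => ψ w.2 :=
  ⟨isCQ_of_space (locLipOn_univ_iff.1 h.1), fun z _ => h.2.1 (mem_univ z.2),
    h.2.2.comp continuous_snd.continuousOn fun _ _ => mem_univ _⟩

theorem IsC1UpperU.isC1UpperQ {Q : Set (ℝ × X)} {ψ : X → ℝ} (h : IsC1UpperU univ ψ) :
    IsC1UpperQ Q fun w => ψ w.2 :=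
  ⟨isCQ_of_space (locLipOn_univ_iff.1 h.1), fun z _ => h.2.1 (mem_univ z.2),
    h.2.2.comp continuous_snd.continuousOn fun _ _ => mem_univ _⟩

theorem slopeT_space_add_time (f : X → ℝ) (h : ℝ → ℝ) :
    slopeT (fun w : ℝ × X => f w.2 + h w.1) = fun w => mslope f w.2 := by
  ext z
  exact congrFun (mslope_add_const f (h z.1)) z.2

theorem timeDeriv_space_add_time {Y : Type*} (f g : Y → ℝ) {h h' : ℝ → ℝ}
    (hh : ∀ t, HasDerivAt h (h' t) t) (z : ℝ × Y) :
    timeDeriv (fun w : ℝ × Y => f w.2 + (g w.2 + h w.1)) z = h' z.1 :=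
  (((hh z.1).const_add (g z.2)).const_add (f z.2)).deriv

theorem IsSubsol.evolutionSubsol {H : X → ℝ → ℝ} (hH : ∀ x, Continuous (H x)) {u : ℝ × X → ℝ}
    (hu : ContinuousOn u (Ioi 0 ×ˢ univ))
    (h : IsSubsol (Ioi (0 : ℝ) ×ˢ (univ : Set X)) (fun z p q => q + H z.2 p)
      fun z => (u z : EReal)) : EvolutionSubsol H u := by
  intro ψ₁ ψ₂ g g' h₁ h₂ hg hg' t ht x hmax
  have hz : (t, x) ∈ Ioi (0 : ℝ) ×ˢ (univ : Set X) := ⟨ht, mem_univ x⟩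
  set k := u (t, x) - (ψ₁ x + ψ₂ x + g t) with hk
  have hgk : ∀ t, HasDerivAt (fun t => g t + k) (g' t) t := fun t => (hg t).add_const k
  obtain ⟨R, hR, hball⟩ := Metric.eventually_nhds_iff_ball.1 hmax
  have key := h (fun w => ψ₁ w.2) (fun w => ψ₂ w.2 + (g w.1 + k)) h₁.isC1UnderQ
    (isCQ_of_space_add_time h₂ hgk hg') (t, x) hz ⟨R, hR, ?_, ?_⟩
  · rw [slopeT_space_add_time ψ₂ (fun t => g t + k), uscEnvR_comp_snd _ hz,
      timeDeriv_space_add_time ψ₁ ψ₂ hgk] at key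
    exact (Hr_neg_le_zero_iff (G := fun (z : ℝ × X) p => g' t + H z.2 p) (z := (t, x))
      (continuous_const.add (hH x)) (uscEnvR_mslope_nonneg h₂ x) _).1 key
  · rw [uscEnv_coe hu hz, EReal.coe_eq_coe_iff]
    simp only [hk]; ring
  · rintro w ⟨hw, hwQ⟩
    rw [uscEnv_coe hu hwQ, EReal.coe_le_coe_iff]
    linarith [hball w hw]

theorem IsSupersol.evolutionSubsol_neg {H : X → ℝ → ℝ} (hH : ∀ x, Continuous (H x))
    {u : ℝ × X → ℝ} (hu : ContinuousOn u (Ioi 0 ×ˢ univ))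
    (h : IsSupersol (Ioi (0 : ℝ) ×ˢ (univ : Set X)) (fun z p q => q + H z.2 p)
      fun z => (u z : EReal)) : EvolutionSubsol (fun x p => -H x p) fun z => -u z := by
  intro ψ₁ ψ₂ g g' h₁ h₂ hg hg' t ht x hmax
  have hz : (t, x) ∈ Ioi (0 : ℝ) ×ˢ (univ : Set X) := ⟨ht, mem_univ x⟩
  set k := -u (t, x) - (ψ₁ x + ψ₂ x + g t) with hk
  have hgk : ∀ t, HasDerivAt (fun t => -(g t + k)) (-g' t) t :=
    fun t => ((hg t).add_const k).fun_neg
  obtain ⟨R, hR, hball⟩ := Metric.eventually_nhds_iff_ball.1 hmax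
  have key := h (fun w => -ψ₁ w.2) (fun w => -ψ₂ w.2 + -(g w.1 + k)) h₁.neg.isC1UpperQ
    (isCQ_of_space_add_time h₂.neg hgk hg'.neg) (t, x) hz ⟨R, hR, ?_, ?_⟩
  · rw [slopeT_space_add_time (fun y => -ψ₂ y) (fun t => -(g t + k)), uscEnvR_comp_snd _ hz,
      timeDeriv_space_add_time (fun y => -ψ₁ y) (fun y => -ψ₂ y) hgk] at key
    obtain ⟨q, hq, hq'⟩ := (zero_le_Hr_iff (G := fun (z : ℝ × X) p => -g' t + H z.2 p) (z := (t, x))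
      (continuous_const.add (hH x)) (uscEnvR_mslope_nonneg (v := fun y => -ψ₂ y) h₂.neg x) _).1 key
    refine ⟨q, ?_, by linarith⟩
    have h1 : slopeT (fun w : ℝ × X => -ψ₁ w.2) (t, x) = mslope ψ₁ x :=
      congrFun (mslope_neg ψ₁) x
    rwa [h1, mslope_neg] at hq
  · rw [lscEnv_coe hu hz, EReal.coe_eq_coe_iff]
    simp only [hk]; ring
  · rintro w ⟨hw, hwQ⟩
    rw [lscEnv_coe hu hwQ, EReal.coe_le_coe_iff]
    linarith [hball w hw]

/-! ### Passage from the evolution equation to the stationary equation -/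

theorem exists_le_zero_of_forall_approx {G : X → ℝ → ℝ}
    (hG : Continuous fun w : X × ℝ => G w.1 w.2) {x₀ : X} {p r : ℝ}
    (h : ∀ ε > 0, ∃ x q, dist x x₀ ≤ ε ∧ |q - p| ≤ r + ε ∧ G x q ≤ ε) :
    ∃ q, |q - p| ≤ r ∧ G x₀ q ≤ 0 := by
  choose x q hx hq hGq using fun n : ℕ => h (1 / ((n : ℝ) + 1)) (by positivity)
  have h0 : Tendsto (fun n : ℕ => 1 / ((n : ℝ) + 1)) atTop (𝓝 0) :=
    tendsto_one_div_add_atTop_nhds_zero_nat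
  have hxt : Tendsto x atTop (𝓝 x₀) :=
    tendsto_iff_dist_tendsto_zero.2 (squeeze_zero (fun _ => dist_nonneg) hx h0)
  have hqb : ∀ n, q n ∈ closedBall p (r + 1) := fun n => by
    rw [mem_closedBall, Real.dist_eq]
    have : 1 / ((n : ℝ) + 1) ≤ 1 := by
      rw [div_le_one (by positivity)]
      linarith [n.cast_nonneg (α := ℝ)]
    linarith [hq n]
  obtain ⟨q₀, -, φ, hφ, hφt⟩ := tendsto_subseq_of_bounded isBounded_closedBall hqb
  have h0' := h0.comp hφ.tendsto_atTop
  refine ⟨q₀, ?_, ?_⟩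
  · have := le_of_tendsto_of_tendsto' (hφt.sub_const p).abs (h0'.const_add r) fun n => hq (φ n)
    simpa using this
  · have hpair : Tendsto (fun n => (x (φ n), q (φ n))) atTop (𝓝 (x₀, q₀)) :=
      (hxt.comp hφ.tendsto_atTop).prodMk_nhds hφt
    exact le_of_tendsto_of_tendsto' ((hG.tendsto _).comp hpair) h0' fun n => hGq (φ n)

theorem EvolutionSubsol.stationarySubsol [CompactSpace X] {H : X → ℝ → ℝ}
    (hH : Continuous fun w : X × ℝ => H w.1 w.2) {u : ℝ × X → ℝ}
    (hu : ContinuousOn u (Ici 0 ×ˢ univ)) (h : EvolutionSubsol H u) {c : ℝ} {v : X → ℝ}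
    (hle : ∀ ε > 0, ∀ᶠ t in atTop, ∀ x, u (t, x) + c * t ≤ v x + ε)
    (hfreq : ∀ x, ∀ ε > 0, ∃ᶠ t in atTop, v x - ε ≤ u (t, x) + c * t) :
    StationarySubsol (fun x p => H x p - c) v := by
  intro ψ₁ ψ₂ h₁ h₂ x₀ hmax
  refine exists_le_zero_of_forall_approx (G := fun x p => H x p - c)
    (hH.sub continuous_const) fun ε hε => ?_
  have hslope : ∀ᶠ y in 𝓝 x₀, |mslope ψ₁ y - mslope ψ₁ x₀| < ε / 4 := by
    have hc : ContinuousAt (mslope ψ₁) x₀ := h₁.2.2.continuousAt univ_mem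
    simpa [Real.dist_eq] using Metric.tendsto_nhds.1 hc (ε / 4) (by positivity)
  obtain ⟨R, hR, hball⟩ := Metric.eventually_nhds_iff_ball.1
    ((hmax.and hslope).and (eventually_mslope_lt h₂
      (lt_add_of_pos_right (uscEnvR univ (mslope ψ₂) x₀) (by positivity : 0 < ε / 4))))
  obtain ⟨ρ, hρ, hρR, hρε⟩ : ∃ ρ > 0, ρ < R ∧ ρ ≤ ε / 4 :=
    ⟨min (R / 2) (ε / 4), by positivity, by linarith [min_le_left (R / 2) (ε / 4)],
      min_le_right _ _⟩
  have hη : 0 < ρ ^ 2 / 16 := by positivity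
  obtain ⟨T₀, hT₀⟩ := eventually_atTop.1 (hle _ hη)
  obtain ⟨T, hTge, hT⟩ := frequently_atTop.1 (hfreq x₀ _ hη) (max T₀ 0 + ρ + 1)
  have hmem : ∀ w ∈ closedBall (T, x₀) ρ, T₀ ≤ w.1 ∧ 0 < w.1 ∧ w.2 ∈ ball x₀ R := fun w hw => by
    rw [mem_closedBall, Prod.dist_eq, max_le_iff, Real.dist_eq, abs_le] at hw
    exact ⟨by linarith [le_max_left T₀ 0, hw.1.1], by linarith [le_max_right T₀ 0, hw.1.1],
      mem_ball.2 (hw.2.trans_lt hρR)⟩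
  have hψ₁ : Continuous ψ₁ := (locLipOn_univ_iff.1 h₁.1).continuous
  have hψ₂ : Continuous ψ₂ := h₂.continuous
  have hpsi : LocallyLipschitz fun y => ψ₂ y + 1 * dist y x₀ ^ 2 :=
    h₂.add (locallyLipschitz_dist_sq 1 x₀)
  have hcont : ContinuousOn (fun w : ℝ × X => u w - (ψ₁ w.2 + (ψ₂ w.2 + 1 * dist w.2 x₀ ^ 2) +
      (-c * w.1 + (w.1 - T) ^ 2))) (closedBall (T, x₀) ρ) := by
    refine (hu.mono fun w hw => ⟨(hmem w hw).2.1.le, mem_univ _⟩).sub ?_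
    fun_prop
  obtain ⟨⟨t, x⟩, hz, hzmax⟩ := (isCompact_closedBall (T, x₀) ρ).exists_isMaxOn
    ⟨(T, x₀), mem_closedBall_self hρ.le⟩ hcont
  have hsum : dist x x₀ ^ 2 + (t - T) ^ 2 ≤ ρ ^ 2 / 8 := by
    have e1 := hzmax (mem_closedBall_self hρ.le)
    have e2 := hT₀ t (hmem _ hz).1 x
    have e3 := (hball x (hmem _ hz).2.2).1.1
    simp only [mem_ofPred_eq, dist_self, sub_self] at e1
    linarith
  have hdx : dist x x₀ < ρ / 2 :=
    lt_of_pow_lt_pow_left₀ 2 (by positivity) (by nlinarith [sq_nonneg (t - T)])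
  have hdt : |t - T| < ρ / 2 := by
    refine lt_of_pow_lt_pow_left₀ 2 (by positivity) ?_
    rw [sq_abs]
    nlinarith [sq_nonneg (dist x x₀)]
  have hnear : closedBall (T, x₀) ρ ∈ 𝓝 (t, x) := by
    refine mem_of_superset (isOpen_ball.mem_nhds ?_) ball_subset_closedBall
    rw [mem_ball, Prod.dist_eq, max_lt_iff, Real.dist_eq]
    exact ⟨by linarith, by linarith⟩
  obtain ⟨q, hq, hHq⟩ := h ψ₁ (fun y => ψ₂ y + 1 * dist y x₀ ^ 2)
    (fun s => -c * s + (s - T) ^ 2) (fun s => -c + 2 * (s - T)) h₁ hpsi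
    (fun s => by
      have := ((hasDerivAt_id s).const_mul (-c)).add (((hasDerivAt_id s).sub_const T).pow 2)
      exact this.congr_deriv (by simp))
    (by fun_prop) t (hmem _ hz).2.1 x (by filter_upwards [hnear] with w hw using hzmax hw)
  have husc : uscEnvR univ (mslope fun y => ψ₂ y + 1 * dist y x₀ ^ 2) x ≤
      uscEnvR univ (mslope ψ₂) x₀ + ε / 4 + 2 * ρ := by
    have hbρ : ball x₀ ρ ∈ 𝓝 x := isOpen_ball.mem_nhds (mem_ball.2 (by linarith))
    refine uscEnvR_mslope_le hpsi ?_
    filter_upwards [hbρ] with y hy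
    refine (mslope_add_le h₂ (by positivity : 0 ≤ 2 * ρ) ?_).trans
      (add_le_add_left (hball y (ball_subset_ball hρR.le hy)).2.le _)
    filter_upwards [isOpen_ball.mem_nhds hy] with z hz
    rw [one_mul, one_mul]
    refine (abs_dist_sq_sub_le y x₀ z).trans ?_
    gcongr
    linarith [mem_ball.1 hy, mem_ball.1 hz]
  have hs := (hball x (hmem _ hz).2.2).1.2
  refine ⟨x, q, by linarith, ?_, by linarith [abs_lt.1 hdt]⟩
  linarith [abs_sub_le q (mslope ψ₁ x) (mslope ψ₁ x₀)]

/-! ### Bounds for solutions of the evolution equation -/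

theorem EvolutionSubsol.exists_penalized_max [CompactSpace X] [Nonempty X] {H : X → ℝ → ℝ}
    {u : ℝ × X → ℝ} {M : NNReal} (hu : LipschitzOnWith M u (Ici 0 ×ˢ univ))
    (h : EvolutionSubsol H u) {ψ : X → ℝ} (hψ : LocallyLipschitz ψ) {t₁ : ℝ} (ht₁ : 0 ≤ t₁)
    (b : ℝ) {δ : ℝ} (hδ : 0 < δ) :
    ∃ t x, t₁ ≤ t ∧ (∀ s y, t₁ ≤ s →
        u (s, y) - ψ y - (b * (s - t₁) + δ * ((s - t₁) + (s - t₁) ^ 2)) ≤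
        u (t, x) - ψ x - (b * (t - t₁) + δ * ((t - t₁) + (t - t₁) ^ 2))) ∧
      (t = t₁ ∨ ∃ q, |q| ≤ uscEnvR univ (mslope ψ) x ∧ b + δ + H x q ≤ 0) := by
  set f : ℝ × X → ℝ := fun w =>
    u w - ψ w.2 - (b * (w.1 - t₁) + δ * ((w.1 - t₁) + (w.1 - t₁) ^ 2)) with hf
  set τ := (M + |b|) / δ with hτdef
  have hτ : 0 ≤ τ := by positivity
  have hcont : ContinuousOn f (Icc t₁ (t₁ + τ) ×ˢ univ) := by
    have hc := hψ.continuous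
    refine ((hu.continuousOn.mono ?_).sub (by fun_prop)).sub (by fun_prop)
    exact prod_mono (fun s hs => ht₁.trans hs.1) subset_rfl
  obtain ⟨⟨t, x⟩, hz, hzmax⟩ := (isCompact_Icc.prod isCompact_univ).exists_isMaxOn
    ((nonempty_Icc.2 (by linarith)).prod univ_nonempty) hcont
  have hglob : ∀ s y, t₁ ≤ s → f (s, y) ≤ f (t, x) := by
    intro s y hs
    rcases le_or_gt s (t₁ + τ) with hs' | hs'
    · exact hzmax (show (s, y) ∈ _ from ⟨⟨hs, hs'⟩, mem_univ y⟩)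
    · have h1 : f (t₁, y) ≤ f (t, x) :=
        hzmax (show (t₁, y) ∈ _ from ⟨⟨le_rfl, by linarith⟩, mem_univ y⟩)
      refine le_trans ?_ h1
      have h2 := hu.dist_le_mul (s, y) ⟨ht₁.trans hs, mem_univ y⟩ (t₁, y) ⟨ht₁, mem_univ y⟩
      rw [Real.dist_eq, Prod.dist_eq, dist_self, max_eq_left dist_nonneg, Real.dist_eq,
        abs_of_nonneg (sub_nonneg.2 hs)] at h2
      have h3 : M + |b| ≤ δ * (s - t₁) := by
        rw [← div_le_iff₀' hδ]; linarith
      have h4 := mul_le_mul_of_nonneg_right h3 (sub_nonneg.2 hs)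
      have h5 := mul_le_mul_of_nonneg_right (neg_abs_le b) (sub_nonneg.2 hs)
      have h6 := mul_nonneg hδ.le (sub_nonneg.2 hs)
      simp only [hf, sub_self]
      linarith [le_abs_self (u (s, y) - u (t₁, y))]
  refine ⟨t, x, hz.1.1, hglob, ?_⟩
  rcases hz.1.1.eq_or_lt with heq | hlt
  · exact Or.inl heq.symm
  right
  obtain ⟨q, hq, hHq⟩ := h (fun _ => 0) ψ
    (fun s => b * (s - t₁) + δ * ((s - t₁) + (s - t₁) ^ 2))
    (fun s => b + δ * (1 + 2 * (s - t₁))) isC1UnderU_zero hψ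
    (fun s => by
      have h1 := (hasDerivAt_id s).sub_const t₁
      have := (h1.const_mul b).add ((h1.add (h1.pow 2)).const_mul δ)
      exact this.congr_deriv (by simp))
    (by fun_prop) t (ht₁.trans_lt hlt) x (by
      filter_upwards [(isOpen_Ioi.preimage continuous_fst).mem_nhds
        (show (t, x) ∈ Prod.fst ⁻¹' Ioi t₁ from hlt)] with w hw
      have := hglob w.1 w.2 (le_of_lt hw)
      simp only [hf] at this
      linarith)
  have hzero : mslope (fun _ : X => (0 : ℝ)) x = 0 :=
    le_antisymm (mslope_le le_rfl (by simp)) (mslope_nonneg (LocallyLipschitz.const 0) x)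
  rw [hzero, sub_zero] at hq
  exact ⟨q, hq, by nlinarith⟩

theorem EvolutionSubsol.le_of_forall_le [CompactSpace X] [Nonempty X] {H : X → ℝ → ℝ}
    {u : ℝ × X → ℝ} {M : NNReal} (hu : LipschitzOnWith M u (Ici 0 ×ˢ univ))
    (h : EvolutionSubsol H u) {b B : ℝ} (hb : ∀ x, -b ≤ H x 0) (hB : ∀ x, u (0, x) ≤ B)
    {t : ℝ} (ht : 0 ≤ t) (x : X) : u (t, x) - b * t ≤ B := by
  refine le_of_forall_pos_le_add fun ε hε => ?_
  have hpos : 0 < ε / (t + t ^ 2 + 1) := by positivity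
  obtain ⟨s, y, -, hmax, hs⟩ := h.exists_penalized_max hu (LocallyLipschitz.const 0) le_rfl b hpos
  have hs0 : s = 0 := by
    refine hs.resolve_right ?_
    rintro ⟨q, hq, hHq⟩
    have : uscEnvR univ (mslope fun _ : X => (0 : ℝ)) y ≤ 0 :=
      uscEnvR_mslope_le (LocallyLipschitz.const 0) (.of_forall fun z => mslope_le le_rfl (by simp))
    rw [abs_nonpos_iff.1 (hq.trans this)] at hHq
    linarith [hb y]
  have h1 := hmax t x ht
  have h2 : ε / (t + t ^ 2 + 1) * (t + t ^ 2) ≤ ε := by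
    rw [div_mul_eq_mul_div, div_le_iff₀ (by positivity)]
    nlinarith
  subst hs0
  simp only [sub_zero] at h1
  linarith [hB y]

theorem EvolutionSubsol.add_mul_le [CompactSpace X] {H : X → ℝ → ℝ}
    (hH : Continuous fun w : X × ℝ => H w.1 w.2) (hH0 : ∀ x p, H x 0 ≤ H x p)
    {u : ℝ × X → ℝ} {M : NNReal} (hu : LipschitzOnWith M u (Ici 0 ×ˢ univ))
    (h : EvolutionSubsol H u) {c : ℝ} {a : X} (ha : H a 0 = c) {t₁ t : ℝ} (ht₁ : 0 ≤ t₁)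
    (ht : t₁ ≤ t) : u (t, a) + c * t ≤ u (t₁, a) + c * t₁ := by
  have : Nonempty X := ⟨a⟩
  refine le_of_forall_pos_le_add fun ε hε => ?_
  have hτ : 0 ≤ t - t₁ := sub_nonneg.2 ht
  obtain ⟨δ, hδ, hδε⟩ : ∃ δ > 0, δ * ((t - t₁) + (t - t₁) ^ 2) ≤ ε / 2 := by
    refine ⟨ε / 2 / ((t - t₁) + (t - t₁) ^ 2 + 1), by positivity, ?_⟩
    rw [div_mul_eq_mul_div, div_le_iff₀ (by positivity)]
    nlinarith
  have hnear : ∀ᶠ y in 𝓝 a, c - δ < H y 0 := by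
    have hc : Tendsto (fun y => H y 0) (𝓝 a) (𝓝 (H a 0)) :=
      (hH.comp (Continuous.prodMk_left 0)).tendsto a
    exact hc.eventually_const_lt (by linarith)
  obtain ⟨ρ, hρ, hball⟩ := Metric.eventually_nhds_iff_ball.1 hnear
  obtain ⟨k, hk, hk1, hk2⟩ : ∃ k : ℝ, 0 < k ∧ M / k < ρ ∧ M * (M / k) ≤ ε / 2 := by
    have hlim : Tendsto (fun k : ℝ => M / k) atTop (𝓝 0) := tendsto_const_nhds.div_atTop tendsto_id
    have hlim' : Tendsto (fun k : ℝ => M * (M / k)) atTop (𝓝 0) := by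
      simpa using hlim.const_mul (M : ℝ)
    exact ((eventually_gt_atTop 0).and ((hlim.eventually_lt_const hρ).and
      (hlim'.eventually_le_const (half_pos hε)))).exists
  obtain ⟨s, x, hs₁, hmax, hs⟩ :=
    h.exists_penalized_max hu (locallyLipschitz_dist_sq k a) ht₁ (-c) hδ
  have hLip : ∀ r, 0 ≤ r → u (r, x) - u (r, a) ≤ M * dist x a := fun r hr => by
    have := hu.dist_le_mul (r, x) ⟨hr, mem_univ x⟩ (r, a) ⟨hr, mem_univ a⟩
    rw [Real.dist_eq, Prod.dist_eq, dist_self, max_eq_right dist_nonneg] at this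
    exact (le_abs_self _).trans this
  have hd : dist x a ≤ M / k := by
    rw [le_div_iff₀' hk]
    rcases dist_nonneg.eq_or_lt (a := 0) (b := dist x a) with h0 | h0
    · rw [← h0, mul_zero]; exact M.2
    · have h1 := hmax s a hs₁
      rw [dist_self] at h1
      refine le_of_mul_le_mul_right ?_ h0
      linarith [hLip s (ht₁.trans hs₁)]
  have hs0 : s = t₁ := by
    refine hs.resolve_right ?_
    rintro ⟨q, -, hHq⟩
    linarith [hball x (mem_ball.2 (hd.trans_lt hk1)), hH0 x q]
  subst hs0
  have h1 := hmax t a ht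
  have h2 := mul_le_mul_of_nonneg_left hd M.2
  have h3 : 0 ≤ k * dist x a ^ 2 := by positivity
  simp only [dist_self, sub_self] at h1
  have h4 := hLip s ht₁
  have h5 : (M : ℝ) * dist x a ≤ M * (M / k) := h2
  linarith

/-! ### Comparison for the stationary equation and convergence -/

theorem exists_uniform_limsup [CompactSpace X] {w : ℝ → X → ℝ} {M : NNReal}
    (hw : ∀ t ≥ 0, LipschitzWith M (w t)) {B : ℝ} (hB : ∀ t ≥ 0, ∀ x, |w t x| ≤ B) :
    ∃ v : X → ℝ, LipschitzWith M v ∧ (∀ ε > 0, ∀ᶠ t in atTop, ∀ x, w t x ≤ v x + ε) ∧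
      ∀ x, ∀ ε > 0, ∃ᶠ t in atTop, v x - ε ≤ w t x := by
  have hub : ∀ x, IsBoundedUnder (· ≤ ·) atTop fun t => w t x := fun x =>
    isBoundedUnder_of_eventually_le (a := B)
      ((eventually_ge_atTop 0).mono fun t ht => (abs_le.1 (hB t ht x)).2)
  have hlb : ∀ x, IsCoboundedUnder (· ≤ ·) atTop fun t => w t x := fun x =>
    isCoboundedUnder_le_of_eventually_le _ (x := -B)
      ((eventually_ge_atTop 0).mono fun t ht => (abs_le.1 (hB t ht x)).1)
  set v : X → ℝ := fun x => limsup (fun t => w t x) atTop with hv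
  have hle : ∀ x, ∀ ε > 0, ∀ᶠ t in atTop, w t x ≤ v x + ε := fun x ε hε =>
    (eventually_lt_of_limsup_lt (lt_add_of_pos_right (v x) hε) (hub x)).mono fun t ht => ht.le
  have hfreq : ∀ x, ∀ ε > 0, ∃ᶠ t in atTop, v x - ε ≤ w t x := fun x ε hε =>
    (frequently_lt_of_lt_limsup (hlb x) (sub_lt_self (v x) hε)).mono fun t ht => ht.le
  have hwle : ∀ t ≥ 0, ∀ x y, w t x ≤ w t y + M * dist x y := fun t ht x y => by
    have := (hw t ht).dist_le_mul x y
    rw [Real.dist_eq] at this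
    linarith [le_abs_self (w t x - w t y)]
  have hvLip : LipschitzWith M v := by
    refine LipschitzWith.of_le_add_mul M fun x y => ?_
    refine le_of_forall_pos_le_add fun ε hε => ?_
    obtain ⟨t, h1, h2, h3⟩ := ((hfreq x (ε / 2) (half_pos hε)).and_eventually
      ((hle y (ε / 2) (half_pos hε)).and (eventually_ge_atTop 0))).exists
    linarith [hwle t h3 x y]
  refine ⟨v, hvLip, fun ε hε => ?_, hfreq⟩
  set r := ε / 3 / (M + 1) with hr
  have hMr : M * r ≤ ε / 3 := by
    rw [hr, mul_div_assoc', div_le_iff₀ (by positivity)]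
    nlinarith [M.2]
  obtain ⟨s, -, hsf, hs⟩ :=
    finite_cover_balls_of_compact (isCompact_univ (X := X)) (show 0 < r by positivity)
  filter_upwards [(eventually_all_finite hsf).2 fun y _ => hle y (ε / 3) (by positivity),
    eventually_ge_atTop 0] with t ht ht0 x
  obtain ⟨y, hy, hxy⟩ := mem_iUnion₂.1 (hs (mem_univ x))
  have h1 : M * dist x y ≤ M * r := mul_le_mul_of_nonneg_left (mem_ball.1 hxy).le M.2
  have h2 := hvLip.dist_le_mul y x
  rw [Real.dist_eq, dist_comm] at h2
  linarith [ht y hy, hwle t ht0 x y, le_abs_self (v y - v x)]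

theorem exists_doubling_max [CompactSpace X] [Nonempty X] (hgeo : IsGeodesicSpace X)
    {G : X → ℝ → ℝ} {v w : X → ℝ} {M : NNReal} (hv : Continuous v) (hw : LipschitzWith M w)
    (hsub : StationarySubsol G v) (hsup : StationarySubsol (fun x p => -G x p) fun x => -w x)
    {θ k : ℝ} (hθ : 0 < θ) (hk : 0 < k) :
    ∃ x y p, (∀ z, θ * v z - w z ≤ θ * v x - w y) ∧ dist y x ≤ M / k ∧ p ∈ Icc 0 (2 * M : ℝ) ∧
      G x (p / θ) ≤ 0 ∧ 0 ≤ G y p := by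
  have hwc := hw.continuous
  obtain ⟨⟨x, y⟩, -, hmax⟩ := (isCompact_univ (X := X × X)).exists_isMaxOn univ_nonempty
    (f := fun z => θ * v z.1 - w z.2 - k * dist z.1 z.2 ^ 2) (by fun_prop)
  have hmax' : ∀ a b, θ * v a - w b - k * dist a b ^ 2 ≤ θ * v x - w y - k * dist x y ^ 2 :=
    fun a b => hmax (mem_univ (a, b))
  have hsq : k * dist x y ^ 2 ≤ M * dist x y := by
    have h1 := hmax' x x
    have h2 := hw.dist_le_mul x y
    rw [Real.dist_eq] at h2
    rw [dist_self] at h1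
    linarith [le_abs_self (w x - w y)]
  have hkd : k * dist x y ≤ M := by
    rcases dist_nonneg.eq_or_lt (a := 0) (b := dist x y) with h0 | h0
    · rw [← h0, mul_zero]; exact M.2
    · refine le_of_mul_le_mul_right ?_ h0
      linarith
  refine ⟨x, y, k * (2 * dist x y), fun z => ?_, ?_, ⟨by positivity, by linarith⟩, ?_, ?_⟩
  · have h1 := hmax' z z
    rw [dist_self] at h1
    have : 0 ≤ k * dist x y ^ 2 := by positivity
    linarith
  · rwa [le_div_iff₀' hk, dist_comm]
  · obtain ⟨q, hq, hGq⟩ := hsub (fun z => k / θ * dist z y ^ 2) (fun _ => 0)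
      (isC1UnderU_dist_sq hgeo (by positivity) y) (LocallyLipschitz.const 0) x
      (.of_forall fun z => by
        have h1 := hmax' z y
        refine le_of_mul_le_mul_left ?_ hθ
        have e : ∀ a, θ * (v a - (k / θ * dist a y ^ 2 + 0)) = θ * v a - k * dist a y ^ 2 := by
          intro a
          field_simp
          ring
        rw [e, e]
        linarith)
    rw [mslope_dist_sq hgeo (by positivity)] at hq
    have h0 := hq.trans (uscEnvR_mslope_le (LocallyLipschitz.const 0)
      (.of_forall fun z => mslope_le le_rfl (by simp)))
    have hqe : q = k * (2 * dist x y) / θ := by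
      rw [sub_eq_zero.1 (abs_nonpos_iff.1 h0)]
      ring
    rwa [← hqe]
  · obtain ⟨q, hq, hGq⟩ := hsup (fun z => k * dist z x ^ 2) (fun _ => 0)
      (isC1UnderU_dist_sq hgeo hk.le x) (LocallyLipschitz.const 0) y
      (.of_forall fun z => by
        have h1 := hmax' x z
        rw [dist_comm z x, dist_comm y x]
        linarith)
    rw [mslope_dist_sq hgeo hk.le] at hq
    have h0 := hq.trans (uscEnvR_mslope_le (LocallyLipschitz.const 0)
      (.of_forall fun z => mslope_le le_rfl (by simp)))
    rw [sub_eq_zero.1 (abs_nonpos_iff.1 h0), dist_comm] at hGq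
    linarith

theorem StationarySubsol.le_supersol [CompactSpace X] (hgeo : IsGeodesicSpace X)
    {G : X → ℝ → ℝ} (hG : Continuous fun w : X × ℝ => G w.1 w.2)
    (hconv : ∀ x, ConvexOn ℝ univ (G x)) {v w : X → ℝ} {M : NNReal}
    (hv : Continuous v) (hw : LipschitzWith M w)
    (hsub : StationarySubsol G v) (hsup : StationarySubsol (fun x p => -G x p) fun x => -w x)
    (hA : ∀ x, 0 ≤ G x 0 → v x ≤ w x) (x₀ : X) : v x₀ ≤ w x₀ := by
  have : Nonempty X := ⟨x₀⟩
  by_contra! hlt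
  obtain ⟨N, hN⟩ := (isCompact_univ (X := X)).exists_bound_of_continuousOn hv.continuousOn
  have hN' : ∀ x, |v x| ≤ N := fun x => hN x (mem_univ x)
  have hN0 : 0 ≤ N := (abs_nonneg _).trans (hN' x₀)
  obtain ⟨l, hl0, hl1, hlN⟩ : ∃ l : ℝ, 0 < l ∧ l < 1 ∧ 2 * l * N < v x₀ - w x₀ := by
    have hlim : Tendsto (fun l : ℝ => 2 * l * N) (𝓝[>] 0) (𝓝 0) := by
      have : Tendsto (fun l : ℝ => 2 * l * N) (𝓝 0) (𝓝 (2 * 0 * N)) :=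
        Continuous.tendsto (by fun_prop) 0
      simpa using this.mono_left nhdsWithin_le_nhds
    have hI : ∀ᶠ l : ℝ in 𝓝[>] 0, l ∈ Ioo (0 : ℝ) 1 := Ioo_mem_nhdsGT one_pos
    obtain ⟨l, hl, hl'⟩ := (hI.and (hlim.eventually_lt_const (sub_pos.2 hlt))).exists
    exact ⟨l, hl.1, hl.2, hl'⟩
  have hθ : 0 < 1 - l := by linarith
  choose x y p hmax hdist hp hGx hGy using fun n : ℕ =>
    exists_doubling_max hgeo hv hw hsub hsup hθ (k := (n : ℝ) + 1) (by positivity)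
  obtain ⟨⟨a, q⟩, -, φ, hφ, hφt⟩ := (isCompact_univ.prod isCompact_Icc).tendsto_subseq
    (x := fun n => (x n, p n)) fun n => ⟨mem_univ _, hp n⟩
  have hxa : Tendsto (fun n => x (φ n)) atTop (𝓝 a) := (continuous_fst.tendsto _).comp hφt
  have hpq : Tendsto (fun n => p (φ n)) atTop (𝓝 q) := (continuous_snd.tendsto _).comp hφt
  have hdist0 : Tendsto (fun n : ℕ => (M : ℝ) / (n + 1)) atTop (𝓝 0) := by
    simpa [div_eq_mul_one_div (M : ℝ)] using
      (tendsto_one_div_add_atTop_nhds_zero_nat (𝕜 := ℝ)).const_mul (M : ℝ)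
  have hya : Tendsto (fun n => y (φ n)) atTop (𝓝 a) := by
    refine tendsto_iff_dist_tendsto_zero.2 (squeeze_zero (fun _ => dist_nonneg)
      (fun n => (dist_triangle (y (φ n)) (x (φ n)) a).trans
        (add_le_add_left (hdist (φ n)) _)) ?_)
    simpa using (hdist0.comp hφ.tendsto_atTop).add (tendsto_iff_dist_tendsto_zero.1 hxa)
  have hlim : ∀ {z : ℕ → X} {s : ℕ → ℝ} {r : ℝ}, Tendsto z atTop (𝓝 a) → Tendsto s atTop (𝓝 r) →
      Tendsto (fun n => G (z n) (s n)) atTop (𝓝 (G a r)) := fun hz hs =>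
    (hG.tendsto (a, _)).comp (hz.prodMk_nhds hs)
  have hconvx : ∀ n, G (x n) (p n) ≤ l * G (x n) 0 := fun n => by
    have h1 := (hconv (x n)).2 (mem_univ (p n / (1 - l))) (mem_univ 0) hθ.le hl0.le (by ring)
    have e : (1 - l) • (p n / (1 - l)) + l • (0 : ℝ) = p n := by
      simp only [smul_eq_mul]
      field_simp
      ring
    rw [e, smul_eq_mul, smul_eq_mul] at h1
    linarith [mul_nonpos_of_nonneg_of_nonpos hθ.le (hGx n)]
  have hGa : 0 ≤ G a 0 := by
    have h1 : 0 ≤ G a q := ge_of_tendsto' (hlim hya hpq) fun n => hGy (φ n)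
    have h2 : G a q ≤ l * G a 0 := le_of_tendsto_of_tendsto' (hlim hxa hpq)
      ((hlim hxa tendsto_const_nhds).const_mul l) fun n => hconvx (φ n)
    exact nonneg_of_mul_nonneg_right (h1.trans h2) hl0
  have hval : (1 - l) * v x₀ - w x₀ ≤ (1 - l) * v a - w a :=
    ge_of_tendsto' ((((hv.tendsto a).comp hxa).const_mul (1 - l)).sub
      ((hw.continuous.tendsto a).comp hya)) fun n => hmax (φ n) x₀
  have h1 := mul_le_mul_of_nonneg_left (abs_le.1 (hN' x₀)).2 hl0.le
  have h2 := mul_le_mul_of_nonneg_left (abs_le.1 (hN' a)).1 hl0.le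
  linarith [hA a hGa]

/-- large time behavior. -/
theorem stmt17 [CompactSpace X] [Nonempty X] (hgeo : IsGeodesicSpace X)
    (H : X → ℝ → ℝ)
    (heven : ∀ x p, H x p = H x |p|)
    (hA1 : Continuous fun w : X × ℝ => H w.1 w.2)
    (hA2 : ∀ x, ConvexOn ℝ Set.univ (H x))
    (hA3 : ∀ M : ℝ, ∃ p₀ : ℝ, ∀ p ≥ p₀, ∀ x, M ≤ H x p)
    (hA4 : BddAbove (Set.range fun x => H x 0))
    (c : ℝ) (hc : IsGreatest (Set.range fun x => H x 0) c)
    (u₀ : X → ℝ) (L₀ : NNReal) (hu₀ : LipschitzWith L₀ u₀)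
    (u : ℝ × X → ℝ)
    (hulip : ∃ M : ℝ, ∀ z ∈ Set.Ici (0:ℝ) ×ˢ (Set.univ : Set X),
      ∀ w ∈ Set.Ici (0:ℝ) ×ˢ (Set.univ : Set X), |u z - u w| ≤ M * dist z w)
    (hini : ∀ x : X, u (0, x) = u₀ x)
    (husol : IsSol (Set.Ioi (0:ℝ) ×ˢ (Set.univ : Set X)) (fun z p q => q + H z.2 p)
      (fun z => ((u z : ℝ) : EReal))) :
    ∃ v : X → ℝ,
      TendstoUniformly (fun (t : ℝ) (x : X) => u (t, x) + c * t) v Filter.atTop ∧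
      IsSolS (Set.univ : Set X) (fun x p => H x p - c) (fun x => ((v x : ℝ) : EReal)) := by
  have hHc : ∀ x, Continuous (H x) := fun x => hA1.comp (Continuous.prodMk_right x)
  have hH0 : ∀ x p, H x 0 ≤ H x p := fun x p => by
    have h1 := (hA2 x).2 (mem_univ p) (mem_univ (-p)) (by norm_num : (0 : ℝ) ≤ 1 / 2)
      (by norm_num : (0 : ℝ) ≤ 1 / 2) (by norm_num)
    have h2 : H x (-p) = H x p := by rw [heven x (-p), abs_neg, ← heven]
    simp only [smul_eq_mul, h2] at h1
    rw [show 1 / 2 * p + 1 / 2 * -p = 0 by ring] at h1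
    linarith
  obtain ⟨⟨a, ha⟩, hub⟩ := hc
  have hHle : ∀ x, H x 0 ≤ c := fun x => hub ⟨x, rfl⟩
  obtain ⟨M', hM'⟩ := hulip
  set M : NNReal := M'.toNNReal with hM
  have hu : LipschitzOnWith M u (Ici 0 ×ˢ univ) := by
    refine LipschitzOnWith.of_dist_le_mul fun z hz w hw => (hM' z hz w hw).trans ?_
    gcongr
    exact Real.le_coe_toNNReal M'
  have huQ : ContinuousOn u (Ioi 0 ×ˢ univ) :=
    hu.continuousOn.mono (prod_mono Ioi_subset_Ici_self subset_rfl)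
  have hsub : EvolutionSubsol H u := husol.1.evolutionSubsol hHc huQ
  have hsup : EvolutionSubsol (fun x p => -H x p) fun z => -u z :=
    husol.2.evolutionSubsol_neg hHc huQ
  set w : ℝ → X → ℝ := fun t x => u (t, x) + c * t with hwdef
  have hwLip : ∀ t ≥ 0, LipschitzWith M (w t) := fun t ht => by
    refine LipschitzWith.of_dist_le_mul fun x y => ?_
    have := hu.dist_le_mul (t, x) ⟨ht, mem_univ x⟩ (t, y) ⟨ht, mem_univ y⟩
    rw [Prod.dist_eq, dist_self, max_eq_right dist_nonneg] at this
    simpa [hwdef] using this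
  obtain ⟨N, hN⟩ :=
    (isCompact_univ (X := X)).exists_bound_of_continuousOn hu₀.continuous.continuousOn
  have hN' : ∀ x, |u₀ x| ≤ N := fun x => hN x (mem_univ x)
  have hD : ∀ x, dist x a ≤ diam (univ : Set X) := fun x =>
    dist_le_diam_of_mem isCompact_univ.isBounded (mem_univ x) (mem_univ a)
  have hanti : ∀ b, H b 0 = c → ∀ t₁ t, 0 ≤ t₁ → t₁ ≤ t → w t b ≤ w t₁ b :=
    fun b hb t₁ t ht₁ ht => hsub.add_mul_le hA1 hH0 hu hb ht₁ ht
  have hwB : ∀ t ≥ 0, ∀ x, |w t x| ≤ N + M * diam (univ : Set X) := fun t ht x => by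
    have hdiam : 0 ≤ M * diam (univ : Set X) := by positivity
    rw [abs_le]
    constructor
    · have := EvolutionSubsol.le_of_forall_le (u := fun z => -u z) hu.neg hsup (b := c) (B := N)
        (fun x => neg_le_neg (hHle x))
        (fun x => by simp only [hini]; linarith [(abs_le.1 (hN' x)).1]) ht x
      simp only [hwdef] at this ⊢
      linarith
    · have h1 := (hwLip t ht).dist_le_mul x a
      rw [Real.dist_eq] at h1
      have h2 := mul_le_mul_of_nonneg_left (hD x) M.2
      have h3 : (M : ℝ) * dist x a ≤ M * diam (univ : Set X) := h2
      have h4 := hanti a ha 0 t le_rfl ht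
      have h5 : w 0 a ≤ N := by
        simpa [hwdef, hini] using (abs_le.1 (hN' a)).2
      linarith [le_abs_self (w t x - w t a)]
  obtain ⟨v₁, hv₁, hle₁, hfreq₁⟩ := exists_uniform_limsup hwLip hwB
  obtain ⟨v₂, hv₂, hle₂, hfreq₂⟩ := exists_uniform_limsup (w := fun t x => -w t x)
    (fun t ht => (hwLip t ht).neg) (fun t ht x => by rw [abs_neg]; exact hwB t ht x)
  have hst₁ : StationarySubsol (fun x p => H x p - c) v₁ :=
    hsub.stationarySubsol hA1 hu.continuousOn hle₁ hfreq₁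
  have hst₂ : StationarySubsol (fun x p => -(H x p - c)) v₂ := by
    have e : ∀ t x, -w t x = -u (t, x) + -c * t := fun t x => by simp only [hwdef]; ring
    simp only [e] at hle₂ hfreq₂
    have := hsup.stationarySubsol hA1.neg hu.neg.continuousOn hle₂ hfreq₂
    simpa only [neg_sub, sub_neg_eq_add, neg_add_eq_sub] using this
  have hGc : Continuous fun z : X × ℝ => H z.1 z.2 - c := hA1.sub continuous_const
  have hcomp : ∀ x, v₁ x ≤ -v₂ x := by
    refine hst₁.le_supersol hgeo (G := fun x p => H x p - c) hGc
      (fun x => (hA2 x).sub (concaveOn_const c convex_univ)) hv₁.continuous hv₂.neg ?_ fun b hb => ?_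
    · simpa using hst₂
    refine le_of_forall_pos_le_add fun ε hε => ?_
    obtain ⟨s, hs1, hs2⟩ := ((hfreq₂ b (ε / 2) (half_pos hε)).and_eventually
      (eventually_ge_atTop 0)).exists
    obtain ⟨t, ht1, ht2⟩ := ((hfreq₁ b (ε / 2) (half_pos hε)).and_eventually
      (eventually_ge_atTop s)).exists
    linarith [hanti b (le_antisymm (hHle b) (sub_nonneg.1 hb)) s t hs2 ht2]
  have heq : v₂ = fun x => -v₁ x := by
    ext x
    refine le_antisymm (by linarith [hcomp x]) (le_of_forall_pos_le_add fun ε hε => ?_)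
    obtain ⟨t, h1, h2⟩ := ((hle₁ (ε / 2) (half_pos hε)).and (hle₂ (ε / 2) (half_pos hε))).exists
    linarith [h1 x, h2 x]
  subst heq
  refine ⟨v₁, ?_, hst₁.isSubsolS (fun x => (hHc x).sub continuous_const) hv₁.continuous,
    hst₂.isSupersolS (fun x => (hHc x).sub continuous_const) hv₁.continuous⟩
  refine Metric.tendstoUniformly_iff.2 fun ε hε => ?_
  filter_upwards [hle₁ (ε / 2) (half_pos hε), hle₂ (ε / 2) (half_pos hε)] with t h1 h2 x
  have h3 := h1 x
  have h4 := h2 x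
  rw [Real.dist_eq, abs_lt]
  simp only [hwdef] at h3 h4
  constructor <;> linarith
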